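/- The long-time transition limit factors through the set A: for all x, y ∈ S, Π(x,y) = sup_{a∈A} Π(x,a) · Π(a,y); moreover Π(x,A) = sup_{a∈A} Π(x,a) = 1 for every x ∈ S. -/

import Mathlib

open Filter Topology Metric Set MeasureTheory
open scoped NNReal

noncomputable section

/-- A deviability density on a topological space `E`. -/
def IsDeviabilityDensity {E : Type*} [TopologicalSpace E] (p : E → ℝ) : Prop :=
  (∀ x, p x ∈ Set.Icc (0:ℝ) 1) ∧ (⨆ x, p x) = 1 ∧
    ∀ γ ∈ Set.Ioc (0:ℝ) 1, IsCompact {x | γ ≤ p x}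

variable {S : Type*} [MetricSpace S]

/-- Time shift `θ_s` on continuous paths. -/
def pshift (s : ℝ≥0) (X : C(ℝ≥0, S)) : C(ℝ≥0, S) :=
  ⟨fun t => X (s + t), X.continuous.comp (continuous_const.add continuous_id)⟩

/-- `Π_{x,t}(y)`. -/
def transDen (Px : S → C(ℝ≥0, S) → ℝ) (x : S) (t : ℝ≥0) (y : S) : ℝ :=
  ⨆ X ∈ {X : C(ℝ≥0, S) | X t = y}, Px x X

/-- The standing assumptions (2.2)--(2.5) of the paper, together with the basic
assumptions on the family of path deviability densities `Px` and the set `A`. -/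
structure DevSetup (S : Type*) [MetricSpace S] (Px : S → C(ℝ≥0, S) → ℝ) (A : Set S) :
    Prop where
  dev : ∀ x, IsDeviabilityDensity (Px x)
  start : ∀ x (X : C(ℝ≥0, S)), X 0 ≠ x → Px x X = 0
  /-- (2.2) upper semicontinuity -/
  usc : UpperSemicontinuous (fun q : S × C(ℝ≥0, S) => Px q.1 q.2)
  /-- (2.2) uniform upper compactness -/
  cpt : ∀ K : Set S, IsCompact K → ∀ γ ∈ Set.Ioc (0:ℝ) 1,
    IsCompact (⋃ x ∈ K, {X : C(ℝ≥0, S) | γ ≤ Px x X})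
  /-- (2.3) the maxitive Markov property -/
  markov : ∀ x (X : C(ℝ≥0, S)) (s : ℝ≥0),
    Px x X = (⨆ X' ∈ {X' : C(ℝ≥0, S) | ∀ u ≤ s, X' u = X u}, Px x X') *
      Px (X s) (pshift s X)
  /-- (2.4) `A` is locally finite -/
  locFin : ∀ K : Set S, IsCompact K → (K ∩ A).Finite
  /-- (2.4)(i) -/
  attract : ∀ x (X : C(ℝ≥0, S)), Px x X = 1 → (⨅ t : ℝ≥0, infDist (X t) A) = 0
  /-- (2.4)(ii) -/
  equil : ∀ a ∈ A, Px a (ContinuousMap.const ℝ≥0 a) = 1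
  /-- (2.4)(iii) -/
  connect : ∀ a ∈ A, ∀ a' ∈ A, ∃ t : ℝ≥0, 0 < t ∧ 0 < transDen Px a t a'
  /-- (2.4)(iv) -/
  nearA : ∀ ε : ℝ, 0 < ε → ∃ δ : ℝ, 0 < δ ∧ ∀ x : S, infDist x A < δ →
    ∃ s₀ s₁ : ℝ≥0, 0 < s₀ ∧ 0 < s₁ ∧ ∃ a ∈ A,
      1 - ε < transDen Px x s₀ a ∧ 1 - ε < transDen Px a s₁ x
  /-- (2.4)(v) -/
  localMove : ∀ x : S, ∀ ε : ℝ, 0 < ε → ∃ δ : ℝ, 0 < δ ∧ ∃ t₀ t₁ : ℝ≥0,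
    ∀ x' : S, dist x x' < δ →
      1 - ε < transDen Px x t₀ x' ∧ 1 - ε < transDen Px x' t₁ x
  /-- (2.5) uniform tightness -/
  tight : ∀ K₁ : Set S, IsCompact K₁ → ∀ ε : ℝ, 0 < ε → ∃ K₂ : Set S, IsCompact K₂ ∧
    Filter.limsup (fun t : ℝ≥0 => ⨆ x ∈ K₁, ⨆ y ∈ K₂ᶜ, transDen Px x t y) atTop < ε

/-!
Transition deviabilities into and out of an equilibrium `a ∈ A` are nondecreasing in time, because
waiting at `a` costs nothing; with the Chapman–Kolmogorov inequality this yields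
`Π(x,a) Π(a,y) ≤ liminf Π_{x,t}(y)`. Conversely, by compactness a path that stays in a compact set
and away from `A` for a long enough time has deviability at most some `c < 1`, so by the Markov
property its deviability decays geometrically; together with tightness, every path from `x` of
deviability at least `g > 0` comes close to `A` before a time depending only on `g`. Inserting a
detour through the nearby point of `A` costs an arbitrarily small factor, so
`limsup Π_{x,t}(y) ≤ sup_a Π(x,a) Π(a,y)`. A path from `x` of deviability one comes arbitrarily
close to `A`, whence `Π(x,A) = 1`.
-/

section RealSuprema

variable {ι κ : Type*} {f : ι → ℝ} {g : κ → ℝ} {s : Set ι} {t : Set κ} {c : ℝ}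

theorem biSup_le_of_nonneg (hc : 0 ≤ c) (h : ∀ i ∈ s, f i ≤ c) : ⨆ i ∈ s, f i ≤ c :=
  Real.iSup_le (fun i => Real.iSup_le (h i) hc) hc

theorem le_biSup_of_forall_le (h : ∀ i ∈ s, f i ≤ c) {i : ι} (hi : i ∈ s) :
    f i ≤ ⨆ i ∈ s, f i := by
  refine le_ciSup₂ (f := fun i (_ : i ∈ s) => f i) ⟨c, ?_⟩ i hi
  rintro _ hr
  obtain ⟨j, hj, rfl⟩ := mem_iUnion.1 hr
  exact h j hj

theorem biSup_nonneg_of_forall (hf : ∀ i, 0 ≤ f i) : 0 ≤ ⨆ i ∈ s, f i :=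
  Real.iSup_nonneg fun i => Real.iSup_nonneg fun _ => hf i

theorem exists_lt_of_lt_biSup_of_nonneg (hc : 0 ≤ c) (h : c < ⨆ i ∈ s, f i) :
    ∃ i ∈ s, c < f i := by
  by_contra! hle
  exact h.not_ge (biSup_le_of_nonneg hc hle)

theorem biSup_mul_biSup_le (hf : ∀ i, 0 ≤ f i) (hg : ∀ j, 0 ≤ g j) (hc : 0 ≤ c)
    (h : ∀ i ∈ s, ∀ j ∈ t, f i * g j ≤ c) : (⨆ i ∈ s, f i) * (⨆ j ∈ t, g j) ≤ c := by
  simp only [Real.iSup_mul_of_nonneg (biSup_nonneg_of_forall hg)]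
  refine biSup_le_of_nonneg hc fun i hi => ?_
  simp only [Real.mul_iSup_of_nonneg (hf i)]
  exact biSup_le_of_nonneg hc (h i hi)

end RealSuprema

section Semicontinuity

variable {E F : Type*} [TopologicalSpace E] [TopologicalSpace F]

theorem exists_lt_forall_le_of_upperSemicontinuousOn {γ : Type*} [LinearOrder γ] [NoMinOrder γ]
    {f : E → γ} {s : Set E} {c : γ} (hf : UpperSemicontinuousOn f s) (hs : IsCompact s)
    (hlt : ∀ x ∈ s, f x < c) : ∃ b < c, ∀ x ∈ s, f x ≤ b := by
  rcases s.eq_empty_or_nonempty with rfl | hne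
  · exact (exists_lt c).imp fun b hb => ⟨hb, by simp⟩
  · obtain ⟨m, hm, hmax⟩ := hf.exists_isMaxOn hne hs
    exact ⟨f m, hlt m hm, fun x hx => hmax hx⟩

theorem isCompact_setOf_mem_and_le [T2Space E] {p : E → F → ℝ} {K : Set E} {γ : ℝ}
    (hp : UpperSemicontinuous fun q : E × F => p q.1 q.2) (hK : IsCompact K)
    (hc : IsCompact (⋃ x ∈ K, {y | γ ≤ p x y})) :
    IsCompact {q : E × F | q.1 ∈ K ∧ γ ≤ p q.1 q.2} := by
  refine (hK.prod hc).of_isClosed_subset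
    ((hK.isClosed.preimage continuous_fst).inter (hp.isClosed_preimage γ)) ?_
  exact fun q hq => ⟨hq.1, mem_biUnion hq.1 hq.2⟩

theorem isOpen_setOf_exists_mem_apply_mem {U : Set F} (hU : IsOpen U) (I : Set E) :
    IsOpen {f : C(E, F) | ∃ x ∈ I, f x ∈ U} := by
  have h : {f : C(E, F) | ∃ x ∈ I, f x ∈ U} = ⋃ x ∈ I, {f | f x ∈ U} := by ext; simp
  rw [h]
  exact isOpen_biUnion fun x _ => hU.preimage (ContinuousEvalConst.continuous_eval_const x)

end Semicontinuity

namespace IsDeviabilityDensity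

variable {E : Type*} [TopologicalSpace E] [T2Space E] {p : E → ℝ}

theorem upperSemicontinuous (hp : IsDeviabilityDensity p) : UpperSemicontinuous p := by
  refine upperSemicontinuous_iff_isClosed_preimage.2 fun γ => ?_
  rcases le_or_gt γ 0 with h0 | h0
  · have : p ⁻¹' Ici γ = univ := eq_univ_of_forall fun x => h0.trans (hp.1 x).1
    exact this ▸ isClosed_univ
  rcases le_or_gt γ 1 with h1 | h1
  · exact (hp.2.2 γ ⟨h0, h1⟩).isClosed
  · have : p ⁻¹' Ici γ = ∅ :=
      eq_empty_of_forall_notMem fun x hx => (h1.trans_le hx).not_ge (hp.1 x).2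
    exact this ▸ isClosed_empty

theorem exists_eq_one (hp : IsDeviabilityDensity p) : ∃ x, p x = 1 := by
  have ⟨h01, hsup, hcompact⟩ := hp
  have : Nonempty E := by
    by_contra hE
    rw [not_nonempty_iff] at hE
    simp [Real.iSup_of_isEmpty] at hsup
  obtain ⟨x₀, hx₀⟩ : ∃ x, 1 / 2 < p x :=
    exists_lt_of_lt_ciSup (by rw [hsup]; exact one_half_lt_one)
  obtain ⟨x, hx, hmax⟩ := (hp.upperSemicontinuous.upperSemicontinuousOn _).exists_isMaxOn
    ⟨x₀, hx₀.le⟩ (hcompact (1 / 2) (by norm_num))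
  have hglobal : ∀ y, p y ≤ p x := fun y =>
    (le_or_gt (1 / 2) (p y)).elim (fun hy => hmax hy) fun hy => hy.le.trans hx
  exact ⟨x, (h01 x).2.antisymm (hsup ▸ ciSup_le hglobal)⟩

end IsDeviabilityDensity

/-- The path that follows `X` up to time `s` and `Y`, started afresh, from then on. -/
def concatPath (s : ℝ≥0) (X Y : C(ℝ≥0, S)) (h : X s = Y 0) : C(ℝ≥0, S) where
  toFun t := if t ≤ s then X t else Y (t - s)
  continuous_toFun := by
    refine X.continuous.if_le (Y.continuous.comp (by fun_prop)) continuous_id continuous_const ?_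
    rintro t rfl
    simpa using h

theorem concatPath_apply_of_le {s u : ℝ≥0} {X Y : C(ℝ≥0, S)} (h : X s = Y 0) (hu : u ≤ s) :
    concatPath s X Y h u = X u :=
  if_pos hu

theorem concatPath_apply_add {s : ℝ≥0} {X Y : C(ℝ≥0, S)} (h : X s = Y 0) (u : ℝ≥0) :
    concatPath s X Y h (s + u) = Y u := by
  rcases eq_zero_or_pos u with rfl | hu
  · rw [add_zero, concatPath_apply_of_le h le_rfl, h]
  · have : ¬ s + u ≤ s := (lt_add_of_pos_right s hu).not_ge
    simp [concatPath, this]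

/-- A maxitive Markov family: path deviability densities, indexed by the starting point and
satisfying (2.3). -/
structure IsMaxitiveMarkov (Px : S → C(ℝ≥0, S) → ℝ) : Prop where
  density : ∀ x, IsDeviabilityDensity (Px x)
  start : ∀ x (X : C(ℝ≥0, S)), X 0 ≠ x → Px x X = 0
  markov : ∀ x (X : C(ℝ≥0, S)) (s : ℝ≥0),
    Px x X = (⨆ X' ∈ {X' : C(ℝ≥0, S) | ∀ u ≤ s, X' u = X u}, Px x X') * Px (X s) (pshift s X)

/-- The largest transition deviability from `x` to `y` over all times. It is the long-time limit
`Π(x,y)` when `x` or `y` is an equilibrium. -/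
def supTransDen (Px : S → C(ℝ≥0, S) → ℝ) (x y : S) : ℝ :=
  ⨆ t, transDen Px x t y

/-- The points that reach, and are reached from, a common point of `A` with transition deviability
greater than `c`. -/
def linkedSet (Px : S → C(ℝ≥0, S) → ℝ) (A : Set S) (c : ℝ) : Set S :=
  {z | ∃ a ∈ A, ∃ s t, c < transDen Px z s a ∧ c < transDen Px a t z}

/-- Every path of deviability one enters every linked set of `A` at a level below one, even an open
part of it that does not depend on the path. This is what (2.4)(i) and (2.4)(iv) provide. -/
def IsAttracting (Px : S → C(ℝ≥0, S) → ℝ) (A : Set S) : Prop :=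
  ∀ c < 1, ∃ U ⊆ linkedSet Px A c, IsOpen U ∧ ∀ x X, Px x X = 1 → ∃ t, X t ∈ U

theorem exists_time_exists_lt_one_of_avoids {Px : S → C(ℝ≥0, S) → ℝ} {K U : Set S}
    (hle : ∀ x X, Px x X ≤ 1)
    (husc : UpperSemicontinuous fun q : S × C(ℝ≥0, S) => Px q.1 q.2) (hK : IsCompact K)
    (hcpt : ∀ γ ∈ Set.Ioc (0 : ℝ) 1, IsCompact (⋃ x ∈ K, {X : C(ℝ≥0, S) | γ ≤ Px x X}))
    (hU : IsOpen U) (hit : ∀ x ∈ K, ∀ X, Px x X = 1 → ∃ t, X t ∈ U) :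
    ∃ T : ℝ≥0, ∃ c : ℝ, 0 ≤ c ∧ c < 1 ∧
      ∀ x ∈ K, ∀ X : C(ℝ≥0, S), (∀ s ≤ T, X s ∉ U) → Px x X ≤ c := by
  let level (γ : ℝ) : Set (S × C(ℝ≥0, S)) := {q | q.1 ∈ K ∧ γ ≤ Px q.1 q.2}
  have hlevel : ∀ γ ∈ Set.Ioc (0 : ℝ) 1, IsCompact (level γ) := fun γ hγ =>
    isCompact_setOf_mem_and_le husc hK (hcpt γ hγ)
  let hits (T : ℝ≥0) : Set (S × C(ℝ≥0, S)) := {q | ∃ s ∈ Iic T, q.2 s ∈ U}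
  have hits_open : ∀ T, IsOpen (hits T) := fun T =>
    (isOpen_setOf_exists_mem_apply_mem hU (Iic T)).preimage continuous_snd
  have hits_mono : Monotone hits := fun T T' hT q ⟨s, hs, hsU⟩ => ⟨s, hs.trans hT, hsU⟩
  obtain ⟨T, hT⟩ : ∃ T, level 1 ⊆ hits T := by
    refine (hlevel 1 (by norm_num)).elim_directed_cover hits hits_open (fun q hq => ?_)
      hits_mono.directed_le
    obtain ⟨t, ht⟩ := hit q.1 hq.1 q.2 ((hle _ _).antisymm hq.2)
    exact mem_iUnion.2 ⟨t, t, self_mem_Iic, ht⟩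
  obtain ⟨b, hb, hmax⟩ := exists_lt_forall_le_of_upperSemicontinuousOn
    (husc.upperSemicontinuousOn _) ((hlevel (1 / 2) (by norm_num)).diff (hits_open T))
    fun q hq => lt_of_not_ge fun h1 => hq.2 (hT ⟨hq.1.1, h1⟩)
  refine ⟨T, max b (1 / 2), by positivity, max_lt hb one_half_lt_one, fun x hx X hX => ?_⟩
  by_contra! hlt
  refine (hmax (x, X) ⟨⟨hx, (le_max_right _ _).trans hlt.le⟩, ?_⟩).not_gt
    ((le_max_left _ _).trans_lt hlt)
  rintro ⟨s, hs, hsU⟩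
  exact hX s hs hsU

namespace IsMaxitiveMarkov

variable {Px : S → C(ℝ≥0, S) → ℝ} {A : Set S}

theorem nonneg (hP : IsMaxitiveMarkov Px) (x : S) (X : C(ℝ≥0, S)) : 0 ≤ Px x X :=
  ((hP.density x).1 X).1

theorem le_one (hP : IsMaxitiveMarkov Px) (x : S) (X : C(ℝ≥0, S)) : Px x X ≤ 1 :=
  ((hP.density x).1 X).2

theorem transDen_nonneg (hP : IsMaxitiveMarkov Px) (x : S) (t : ℝ≥0) (y : S) :
    0 ≤ transDen Px x t y :=
  biSup_nonneg_of_forall (hP.nonneg x)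

theorem transDen_le_one (hP : IsMaxitiveMarkov Px) (x : S) (t : ℝ≥0) (y : S) :
    transDen Px x t y ≤ 1 :=
  biSup_le_of_nonneg zero_le_one fun X _ => hP.le_one x X

theorem le_transDen (hP : IsMaxitiveMarkov Px) (x : S) (t : ℝ≥0) (X : C(ℝ≥0, S)) :
    Px x X ≤ transDen Px x t (X t) :=
  le_biSup_of_forall_le (s := {Y : C(ℝ≥0, S) | Y t = X t}) (fun Y _ => hP.le_one x Y) rfl

section MarkovProperty

theorem mul_le_concatPath (hP : IsMaxitiveMarkov Px) (x : S) {s : ℝ≥0} {X Y : C(ℝ≥0, S)}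
    (h : X s = Y 0) : Px x X * Px (X s) Y ≤ Px x (concatPath s X Y h) := by
  have hshift : pshift s (concatPath s X Y h) = Y := ContinuousMap.ext (concatPath_apply_add h)
  rw [hP.markov x (concatPath s X Y h) s, hshift, concatPath_apply_of_le h le_rfl]
  refine mul_le_mul_of_nonneg_right ?_ (hP.nonneg _ _)
  exact le_biSup_of_forall_le (s := {X' : C(ℝ≥0, S) | ∀ u ≤ s, X' u = concatPath s X Y h u})
    (fun X' _ => hP.le_one x X') fun u hu => (concatPath_apply_of_le h hu).symm

theorem transDen_mul_transDen_le (hP : IsMaxitiveMarkov Px) (x y z : S) (s t : ℝ≥0) :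
    transDen Px x s y * transDen Px y t z ≤ transDen Px x (s + t) z := by
  refine biSup_mul_biSup_le (hP.nonneg x) (hP.nonneg y) (hP.transDen_nonneg _ _ _) ?_
  rintro X rfl Y rfl
  by_cases h : Y 0 = X s
  · calc Px x X * Px (X s) Y ≤ Px x (concatPath s X Y h.symm) := hP.mul_le_concatPath x h.symm
      _ ≤ transDen Px x (s + t) (concatPath s X Y h.symm (s + t)) := hP.le_transDen _ _ _
      _ = transDen Px x (s + t) (Y t) := by rw [concatPath_apply_add]
  · rw [hP.start _ Y h, mul_zero]
    exact hP.transDen_nonneg _ _ _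

theorem le_transDen_mul_transDen (hP : IsMaxitiveMarkov Px) (x : S) (X : C(ℝ≥0, S)) (s t : ℝ≥0) :
    Px x X ≤ transDen Px x s (X s) * transDen Px (X s) t (X (s + t)) := by
  rw [hP.markov x X s]
  refine mul_le_mul ?_ (hP.le_transDen (X s) t (pshift s X)) (hP.nonneg _ _)
    (hP.transDen_nonneg _ _ _)
  refine biSup_le_of_nonneg (hP.transDen_nonneg _ _ _) fun X' hX' => ?_
  rw [← hX' s le_rfl]
  exact hP.le_transDen x s X'

theorem le_pshift (hP : IsMaxitiveMarkov Px) (x : S) (X : C(ℝ≥0, S)) (s : ℝ≥0) :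
    Px x X ≤ Px (X s) (pshift s X) := by
  rw [hP.markov x X s]
  exact mul_le_of_le_one_left (hP.nonneg _ _)
    (biSup_le_of_nonneg zero_le_one fun X' _ => hP.le_one x X')

end MarkovProperty

section Equilibria

variable {a : S}

theorem transDen_self (hP : IsMaxitiveMarkov Px) (ha : Px a (ContinuousMap.const ℝ≥0 a) = 1)
    (t : ℝ≥0) : transDen Px a t a = 1 :=
  (hP.transDen_le_one a t a).antisymm (ha ▸ hP.le_transDen a t (ContinuousMap.const ℝ≥0 a))

theorem monotone_transDen_right (hP : IsMaxitiveMarkov Px)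
    (ha : Px a (ContinuousMap.const ℝ≥0 a) = 1) (x : S) :
    Monotone fun t => transDen Px x t a := fun s t hst => by
  simpa [hP.transDen_self ha, add_tsub_cancel_of_le hst] using
    hP.transDen_mul_transDen_le x a a s (t - s)

theorem monotone_transDen_left (hP : IsMaxitiveMarkov Px)
    (ha : Px a (ContinuousMap.const ℝ≥0 a) = 1) (y : S) :
    Monotone fun t => transDen Px a t y := fun s t hst => by
  simpa [hP.transDen_self ha, tsub_add_cancel_of_le hst] using
    hP.transDen_mul_transDen_le a a y (t - s) s

theorem bddAbove_range_transDen (hP : IsMaxitiveMarkov Px) (x y : S) :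
    BddAbove (range fun t => transDen Px x t y) :=
  ⟨1, forall_mem_range.2 fun t => hP.transDen_le_one x t y⟩

theorem tendsto_transDen_right (hP : IsMaxitiveMarkov Px)
    (ha : Px a (ContinuousMap.const ℝ≥0 a) = 1) (x : S) :
    Tendsto (fun t => transDen Px x t a) atTop (𝓝 (supTransDen Px x a)) :=
  tendsto_atTop_ciSup (hP.monotone_transDen_right ha x) (hP.bddAbove_range_transDen x a)

theorem tendsto_transDen_left (hP : IsMaxitiveMarkov Px)
    (ha : Px a (ContinuousMap.const ℝ≥0 a) = 1) (y : S) :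
    Tendsto (fun t => transDen Px a t y) atTop (𝓝 (supTransDen Px a y)) :=
  tendsto_atTop_ciSup (hP.monotone_transDen_left ha y) (hP.bddAbove_range_transDen a y)

end Equilibria

section SupTransDen

theorem supTransDen_nonneg (hP : IsMaxitiveMarkov Px) (x y : S) : 0 ≤ supTransDen Px x y :=
  Real.iSup_nonneg fun t => hP.transDen_nonneg x t y

theorem supTransDen_le_one (hP : IsMaxitiveMarkov Px) (x y : S) : supTransDen Px x y ≤ 1 :=
  ciSup_le fun t => hP.transDen_le_one x t y

theorem transDen_mul_transDen_le_supTransDen (hP : IsMaxitiveMarkov Px) (x y z : S) (s t : ℝ≥0) :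
    transDen Px x s y * transDen Px y t z ≤ supTransDen Px x z :=
  (hP.transDen_mul_transDen_le x y z s t).trans
    (le_ciSup (hP.bddAbove_range_transDen x z) (s + t))

theorem supTransDen_mul_supTransDen_le_biSup (hP : IsMaxitiveMarkov Px) (x y : S) {a : S}
    (ha : a ∈ A) : supTransDen Px x a * supTransDen Px a y ≤
      ⨆ a ∈ A, supTransDen Px x a * supTransDen Px a y :=
  le_biSup_of_forall_le (f := fun a => supTransDen Px x a * supTransDen Px a y)
    (fun _ _ => mul_le_one₀ (hP.supTransDen_le_one _ _) (hP.supTransDen_nonneg _ _)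
      (hP.supTransDen_le_one _ _)) ha

theorem biSup_supTransDen_mul_supTransDen_nonneg (hP : IsMaxitiveMarkov Px) (x y : S) :
    0 ≤ ⨆ a ∈ A, supTransDen Px x a * supTransDen Px a y :=
  biSup_nonneg_of_forall fun _ =>
    mul_nonneg (hP.supTransDen_nonneg _ _) (hP.supTransDen_nonneg _ _)

theorem sq_mul_transDen_mul_transDen_le_biSup (hP : IsMaxitiveMarkov Px) {c : ℝ} (hc : 0 ≤ c)
    (x y : S) {z : S} (hz : z ∈ linkedSet Px A c) (s t : ℝ≥0) :
    c ^ 2 * (transDen Px x s z * transDen Px z t y) ≤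
      ⨆ a ∈ A, supTransDen Px x a * supTransDen Px a y := by
  obtain ⟨a, ha, s', t', hza, haz⟩ := hz
  have hxa : transDen Px x s z * c ≤ supTransDen Px x a :=
    (mul_le_mul_of_nonneg_left hza.le (hP.transDen_nonneg _ _ _)).trans
      (hP.transDen_mul_transDen_le_supTransDen x z a s s')
  have hay : c * transDen Px z t y ≤ supTransDen Px a y :=
    (mul_le_mul_of_nonneg_right haz.le (hP.transDen_nonneg _ _ _)).trans
      (hP.transDen_mul_transDen_le_supTransDen a z y t' t)
  calc c ^ 2 * (transDen Px x s z * transDen Px z t y)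
      = transDen Px x s z * c * (c * transDen Px z t y) := by ring
    _ ≤ supTransDen Px x a * supTransDen Px a y :=
        mul_le_mul hxa hay (mul_nonneg hc (hP.transDen_nonneg _ _ _)) (hP.supTransDen_nonneg _ _)
    _ ≤ _ := hP.supTransDen_mul_supTransDen_le_biSup x y ha

theorem biSup_supTransDen_eq_one (hP : IsMaxitiveMarkov Px) (hA : IsAttracting Px A) (x : S) :
    ⨆ a ∈ A, supTransDen Px x a = 1 := by
  refine (biSup_le_of_nonneg zero_le_one fun a _ => hP.supTransDen_le_one x a).antisymm ?_
  refine le_of_forall_lt fun c hc => ?_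
  obtain ⟨X, hX⟩ := (hP.density x).exists_eq_one
  obtain ⟨U, hUA, -, hit⟩ := hA c hc
  obtain ⟨t, ht⟩ := hit x X hX
  obtain ⟨a, ha, s, -, hs, -⟩ := hUA ht
  calc c < 1 * transDen Px (X t) s a := by rwa [one_mul]
    _ ≤ transDen Px x t (X t) * transDen Px (X t) s a :=
        mul_le_mul_of_nonneg_right (hX ▸ hP.le_transDen x t X) (hP.transDen_nonneg _ _ _)
    _ ≤ supTransDen Px x a := hP.transDen_mul_transDen_le_supTransDen x (X t) a t s
    _ ≤ _ := le_biSup_of_forall_le (fun a _ => hP.supTransDen_le_one x a) ha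

end SupTransDen

section HittingTimes

theorem le_pow_of_avoids (hP : IsMaxitiveMarkov Px) {K U : Set S} {c : ℝ} {T : ℝ≥0} (hc : 0 ≤ c)
    (h : ∀ x ∈ K, ∀ X : C(ℝ≥0, S), (∀ s ≤ T, X s ∉ U) → Px x X ≤ c) (n : ℕ) :
    ∀ (x : S) (X : C(ℝ≥0, S)), (∀ s ≤ n * T, X s ∈ K ∧ X s ∉ U) → Px x X ≤ c ^ n := by
  induction n with
  | zero => exact fun x X _ => by simpa using hP.le_one x X
  | succ n ih =>
    intro x X hX
    by_cases hx : X 0 = x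
    · have hT : ((n + 1 : ℕ) : ℝ≥0) * T = T + n * T := by push_cast; ring
      rw [hT] at hX
      rw [hP.markov x X T, pow_succ']
      refine mul_le_mul ?_ (ih _ _ fun s hs => hX (T + s) (by gcongr)) (hP.nonneg _ _) hc
      refine biSup_le_of_nonneg hc fun X' hX' => h x (hx ▸ (hX 0 zero_le).1) X' fun s hs => ?_
      rw [hX' s hs]
      exact (hX s (hs.trans le_self_add)).2
    · rw [hP.start x X hx]
      positivity

theorem exists_time_forall_exists_mem (hP : IsMaxitiveMarkov Px)
    (husc : UpperSemicontinuous fun q : S × C(ℝ≥0, S) => Px q.1 q.2)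
    {K U : Set S} (hK : IsCompact K)
    (hcpt : ∀ γ ∈ Set.Ioc (0 : ℝ) 1, IsCompact (⋃ x ∈ K, {X : C(ℝ≥0, S) | γ ≤ Px x X}))
    (hU : IsOpen U) (hit : ∀ x ∈ K, ∀ X, Px x X = 1 → ∃ t, X t ∈ U) {x : S} {g : ℝ} (hg : 0 < g)
    (hxK : ∀ᶠ t in atTop, ∀ z ∉ K, transDen Px x t z < g) :
    ∃ N : ℝ≥0, ∀ X : C(ℝ≥0, S), g ≤ Px x X → ∃ s ≤ N, X s ∈ U := by
  obtain ⟨T, c, hc0, hc1, hc⟩ :=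
    exists_time_exists_lt_one_of_avoids hP.le_one husc hK hcpt hU hit
  obtain ⟨n, hn⟩ := exists_pow_lt_of_lt_one hg hc1
  obtain ⟨s₀, hs₀⟩ := eventually_atTop.1 hxK
  refine ⟨s₀ + n * T, fun X hX => ?_⟩
  by_contra! havoid
  have hmem : ∀ s, X (s₀ + s) ∈ K := fun s => by
    by_contra hnot
    exact (hs₀ (s₀ + s) le_self_add _ hnot).not_ge (hX.trans (hP.le_transDen x _ X))
  have hpow : Px (X s₀) (pshift s₀ X) ≤ c ^ n :=
    hP.le_pow_of_avoids hc0 hc n _ _ fun s hs => ⟨hmem s, havoid (s₀ + s) (by gcongr)⟩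
  exact (hX.trans ((hP.le_pshift x X s₀).trans hpow)).not_gt hn

end HittingTimes

section LongTimeLimit

theorem eventually_lt_transDen (hP : IsMaxitiveMarkov Px) {a : S}
    (ha : Px a (ContinuousMap.const ℝ≥0 a) = 1) {x y : S} {c : ℝ}
    (hc : c < supTransDen Px x a * supTransDen Px a y) :
    ∀ᶠ t in atTop, c < transDen Px x t y := by
  have hhalf : Tendsto (fun t : ℝ≥0 => t / 2) atTop atTop :=
    tendsto_id.atTop_div_const two_pos
  have hlim := ((hP.tendsto_transDen_right ha x).mul (hP.tendsto_transDen_left ha y)).comp hhalf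
  filter_upwards [hlim.eventually (lt_mem_nhds hc)] with t ht
  simpa only [add_halves] using ht.trans_le (hP.transDen_mul_transDen_le x a y (t / 2) (t / 2))

theorem eventually_transDen_lt (hP : IsMaxitiveMarkov Px)
    (husc : UpperSemicontinuous fun q : S × C(ℝ≥0, S) => Px q.1 q.2)
    (hcpt : ∀ K : Set S, IsCompact K → ∀ γ ∈ Set.Ioc (0 : ℝ) 1,
      IsCompact (⋃ x ∈ K, {X : C(ℝ≥0, S) | γ ≤ Px x X}))
    (hA : IsAttracting Px A) {x y : S}
    (htight : ∀ ε > 0, ∃ K, IsCompact K ∧ ∀ᶠ t in atTop, ∀ z ∉ K, transDen Px x t z < ε)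
    {c : ℝ} (hc : ⨆ a ∈ A, supTransDen Px x a * supTransDen Px a y < c) :
    ∀ᶠ t in atTop, transDen Px x t y < c := by
  have hR := hP.biSup_supTransDen_mul_supTransDen_nonneg (A := A) x y
  set R := ⨆ a ∈ A, supTransDen Px x a * supTransDen Px a y
  obtain ⟨g, hRg, hgc⟩ := exists_between hc
  have hg : 0 < g := hR.trans_lt hRg
  obtain ⟨r, hr, hr1⟩ : ∃ r, √(R / g) < r ∧ r < 1 :=
    exists_between ((Real.sqrt_lt' one_pos).2 (by rwa [one_pow, div_lt_one hg]))
  have hr0 : 0 < r := (Real.sqrt_nonneg _).trans_lt hr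
  have hRr : R < r ^ 2 * g := (div_lt_iff₀ hg).1 ((Real.sqrt_lt' hr0).1 hr)
  obtain ⟨U, hUA, hU, hit⟩ := hA r hr1
  obtain ⟨K, hK, hxK⟩ := htight g hg
  obtain ⟨N, hN⟩ := hP.exists_time_forall_exists_mem husc hK (hcpt K hK) hU
    (fun x _ => hit x) hg hxK
  filter_upwards [eventually_ge_atTop N] with t ht
  by_contra! hct
  obtain ⟨X, rfl, hX⟩ := exists_lt_of_lt_biSup_of_nonneg hg.le (hgc.trans_le hct)
  obtain ⟨s, hs, hsU⟩ := hN X hX.le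
  have hsplit := hP.le_transDen_mul_transDen x X s (t - s)
  rw [add_tsub_cancel_of_le (hs.trans ht)] at hsplit
  refine hRr.not_ge ?_
  calc r ^ 2 * g ≤ r ^ 2 * (transDen Px x s (X s) * transDen Px (X s) (t - s) (X t)) := by
        gcongr; exact hX.le.trans hsplit
    _ ≤ R := hP.sq_mul_transDen_mul_transDen_le_biSup hr0.le x (X t) (hUA hsU) s (t - s)

theorem tendsto_transDen (hP : IsMaxitiveMarkov Px)
    (husc : UpperSemicontinuous fun q : S × C(ℝ≥0, S) => Px q.1 q.2)
    (hcpt : ∀ K : Set S, IsCompact K → ∀ γ ∈ Set.Ioc (0 : ℝ) 1,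
      IsCompact (⋃ x ∈ K, {X : C(ℝ≥0, S) | γ ≤ Px x X}))
    (hequil : ∀ a ∈ A, Px a (ContinuousMap.const ℝ≥0 a) = 1) (hA : IsAttracting Px A) {x : S}
    (htight : ∀ ε > 0, ∃ K, IsCompact K ∧ ∀ᶠ t in atTop, ∀ z ∉ K, transDen Px x t z < ε) (y : S) :
    Tendsto (fun t => transDen Px x t y) atTop
      (𝓝 (⨆ a ∈ A, supTransDen Px x a * supTransDen Px a y)) := by
  refine tendsto_order.2 ⟨fun c hc => ?_, fun c hc =>
    hP.eventually_transDen_lt husc hcpt hA htight hc⟩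
  rcases lt_or_ge c 0 with hc0 | hc0
  · exact .of_forall fun t => hc0.trans_le (hP.transDen_nonneg x t y)
  · obtain ⟨a, ha, hca⟩ := exists_lt_of_lt_biSup_of_nonneg hc0 hc
    exact hP.eventually_lt_transDen (hequil a ha) hca

end LongTimeLimit

end IsMaxitiveMarkov

namespace DevSetup

variable {Px : S → C(ℝ≥0, S) → ℝ} {A : Set S}

theorem isMaxitiveMarkov (hyp : DevSetup S Px A) : IsMaxitiveMarkov Px :=
  ⟨hyp.dev, hyp.start, hyp.markov⟩

theorem isAttracting (hyp : DevSetup S Px A) : IsAttracting Px A := fun c hc => by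
  obtain ⟨δ, hδ, hnear⟩ := hyp.nearA (1 - c) (sub_pos.2 hc)
  refine ⟨{z | infDist z A < δ}, fun z hz => ?_,
    isOpen_lt (continuous_infDist_pt A) continuous_const, fun x X hX => ?_⟩
  · obtain ⟨s₀, s₁, -, -, a, ha, hza, haz⟩ := hnear z hz
    rw [sub_sub_cancel] at hza haz
    exact ⟨a, ha, s₀, s₁, hza, haz⟩
  · exact exists_lt_of_ciInf_lt (hyp.attract x X hX ▸ hδ)

theorem exists_isCompact_eventually_transDen_lt (hyp : DevSetup S Px A) (x : S) {ε : ℝ}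
    (hε : 0 < ε) : ∃ K, IsCompact K ∧ ∀ᶠ t in atTop, ∀ z ∉ K, transDen Px x t z < ε := by
  obtain ⟨K, hK, hlim⟩ := hyp.tight {x} isCompact_singleton ε hε
  have hsup_le (t : ℝ≥0) (z : S) : ⨆ y ∈ Kᶜ, transDen Px z t y ≤ 1 :=
    biSup_le_of_nonneg zero_le_one fun y _ => hyp.isMaxitiveMarkov.transDen_le_one z t y
  have hev := eventually_lt_of_limsup_lt hlim
    (isBoundedUnder_of ⟨1, fun t => biSup_le_of_nonneg zero_le_one fun z _ => hsup_le t z⟩)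
  refine ⟨K, hK, hev.mono fun t ht y hy => ?_⟩
  calc transDen Px x t y ≤ ⨆ y ∈ Kᶜ, transDen Px x t y :=
        le_biSup_of_forall_le (fun y _ => hyp.isMaxitiveMarkov.transDen_le_one x t y) hy
    _ ≤ ⨆ z ∈ ({x} : Set S), ⨆ y ∈ Kᶜ, transDen Px z t y :=
        le_biSup_of_forall_le (f := fun z => ⨆ y ∈ Kᶜ, transDen Px z t y)
          (fun z _ => hsup_le t z) (mem_singleton x)
    _ < ε := ht

end DevSetup

theorem stmt7_general (Px : S → C(ℝ≥0, S) → ℝ) (A : Set S) (hP : IsMaxitiveMarkov Px)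
    (husc : UpperSemicontinuous fun q : S × C(ℝ≥0, S) => Px q.1 q.2)
    (hcpt : ∀ K : Set S, IsCompact K → ∀ γ ∈ Set.Ioc (0 : ℝ) 1,
      IsCompact (⋃ x ∈ K, {X : C(ℝ≥0, S) | γ ≤ Px x X}))
    (hequil : ∀ a ∈ A, Px a (ContinuousMap.const ℝ≥0 a) = 1) (hA : IsAttracting Px A)
    (htight : ∀ x, ∀ ε > 0, ∃ K, IsCompact K ∧ ∀ᶠ t in atTop, ∀ z ∉ K, transDen Px x t z < ε) :
    ∃ PL : S → S → ℝ,
      (∀ x y, Tendsto (fun t => transDen Px x t y) atTop (𝓝 (PL x y))) ∧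
      (∀ x y, PL x y = ⨆ a ∈ A, PL x a * PL a y) ∧ ∀ x, ⨆ a ∈ A, PL x a = 1 := by
  let PL (x y : S) : ℝ := ⨆ a ∈ A, supTransDen Px x a * supTransDen Px a y
  have hlim (x y : S) : Tendsto (fun t => transDen Px x t y) atTop (𝓝 (PL x y)) :=
    hP.tendsto_transDen husc hcpt hequil hA (htight x) y
  have hright (x a : S) (ha : a ∈ A) : PL x a = supTransDen Px x a :=
    tendsto_nhds_unique (hlim x a) (hP.tendsto_transDen_right (hequil a ha) x)
  have hleft (a y : S) (ha : a ∈ A) : PL a y = supTransDen Px a y :=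
    tendsto_nhds_unique (hlim a y) (hP.tendsto_transDen_left (hequil a ha) y)
  refine ⟨PL, hlim, fun x y => ?_, fun x => ?_⟩
  · exact iSup_congr fun a => iSup_congr fun ha => by rw [hright x a ha, hleft a y ha]
  · rw [← hP.biSup_supTransDen_eq_one hA x]
    exact iSup_congr fun a => iSup_congr fun ha => hright x a ha

theorem stmt7 (Px : S → C(ℝ≥0, S) → ℝ) (A : Set S) (hyp : DevSetup S Px A)
    (PL : S → S → ℝ)
    (hPL : ∀ x y : S, Tendsto (fun t : ℝ≥0 => transDen Px x t y) atTop (𝓝 (PL x y))) :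
    (∀ x y : S, PL x y = ⨆ a ∈ A, PL x a * PL a y) ∧
    ∀ x : S, (⨆ a ∈ A, PL x a) = 1 := by
  obtain ⟨PL', hPL', hfactor⟩ := stmt7_general Px A hyp.isMaxitiveMarkov hyp.usc hyp.cpt hyp.equil
    hyp.isAttracting fun x _ hε => hyp.exists_isCompact_eventually_transDen_lt x hε
  rw [funext₂ fun x y => tendsto_nhds_unique (hPL x y) (hPL' x y)]
  exact hfactor
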